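/- Let T = {P, P₁, P₂} be a self-polar triangle containing the point P = (0:0:1). Let L̄ ≤ M_ℓ be a subgroup mapping T to itself such that the pointwise stabilizer L̄_T of T in L̄ has index 2 in L̄. Set w := |L̄ ∩ Z| and t := |L̄|/(2w). Then the number N of orbits of L̄ acting on O equals 1 + (q−t+1)/(2t) + (q+1)·gcd(w,t)/(t·w) + (q+1)²·(q−2)/(2·t·w). -/

import Mathlib

/-!
The orbits are counted with the Cauchy–Frobenius lemma (`numOrbits_mul_card`).

The vertices of the triangle other than `(0 : 0 : 1)` are spanned by orthonormal vectors, because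
the norm `x ↦ x ^ (q + 1)` is onto the nonzero elements of the subfield of order `q`. The matrix
with these vectors and the third basis vector as columns is unitary; since `-1 = 1` it preserves
the Hermitian curve, and conjugation by it turns `L` into a group of matrices `diag(x, y, 1)` and
swaps `[[0, β, 0], [γ, 0, 0], [0, 0, 1]]` with entries of norm one (`numOrbits_frame`). Half of
the `2tw` elements are diagonal, and half are swaps.

The fixed points on the curve are as follows. The identity fixes `q ^ 3 + 1` points; a diagonal
matrix other than the identity with two equal eigenvalues fixes the `q + 1` points on one side of
the triangle; a diagonal matrix with three distinct eigenvalues fixes none (`card_fix_diagGL`). A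
swap fixes exactly one point: in characteristic two its restriction to the plane of the first two
coordinates has a single eigenvector, and this eigenvector is isotropic (`card_fix_swap`).

It remains to count the elements `diag(1, y, 1)` of the group (conjugation by a swap gives the same
number of elements `diag(x, 1, 1)`). The pairs `(x, y)` with `diag(x, y, 1)` in the group form a
swap-invariant group of odd order, which is the direct product of its elements `(x, x)`, `w` in
number, and `(x, x⁻¹)`, `t` in number. As `(1, x²) = (x, x)(x⁻¹, x)` and the unit group of the
field is cyclic, the count is `gcd(w, t)` (`card_one_snd_eq_gcd`).
-/

open Matrix

noncomputable def glAct {F : Type*} [Field F] (M : GL (Fin 3) F)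
    (x : Projectivization F (Fin 3 → F)) : Projectivization F (Fin 3 → F) :=
  Projectivization.map
    ((LinearMap.GeneralLinearGroup.generalLinearEquiv F (Fin 3 → F)
        (Matrix.GeneralLinearGroup.toLin M)).toLinearMap)
    ((LinearMap.GeneralLinearGroup.generalLinearEquiv F (Fin 3 → F)
        (Matrix.GeneralLinearGroup.toLin M)).injective) x

noncomputable def numOrbits {F : Type*} [Field F] (L : Subgroup (GL (Fin 3) F))
    (O : Set (Projectivization F (Fin 3 → F))) : ℕ :=
  Nat.card ((fun x => {y | ∃ g ∈ L, glAct g x = y}) '' O :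
    Set (Set (Projectivization F (Fin 3 → F))))

def hermitianPts (q : ℕ) (F : Type*) [Field F] : Set (Projectivization F (Fin 3 → F)) :=
  {x | x.rep 1 ^ (q + 1) = x.rep 0 ^ (q + 1) - x.rep 2 ^ (q + 1)}

def MlSet (q : ℕ) (F : Type*) [Field F] : Set (GL (Fin 3) F) :=
  {M | ∃ a c τ : F, a ^ (q + 1) - c ^ (q + 1) = 1 ∧ τ ^ (q + 1) = 1 ∧
    (M : Matrix (Fin 3) (Fin 3) F) = !![a, τ * c ^ q, 0; c, τ * a ^ q, 0; 0, 0, 1]}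

def ZSet (q : ℕ) (F : Type*) [Field F] : Set (GL (Fin 3) F) :=
  {M | ∃ ε : F, ε ^ (q + 1) = 1 ∧ (M : Matrix (Fin 3) (Fin 3) F) = Matrix.diagonal ![ε, ε, 1]}

def hermForm (q : ℕ) {F : Type*} [Field F] (u v : Fin 3 → F) : F :=
  -(u 0 ^ q) * v 0 + u 1 ^ q * v 1 + u 2 ^ q * v 2

/-! ### Swap-invariant subgroups of the square of a cyclic group -/

lemma card_inf_of_isCyclic {G : Type*} [CommGroup G] [IsCyclic G] [Finite G]
    (H K : Subgroup G) :
    Nat.card (H ⊓ K : Subgroup G) = Nat.gcd (Nat.card H) (Nat.card K) := by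
  have key : ∀ H : Subgroup G, H = (powMonoidHom (Nat.card H) : G →* G).ker := by
    intro H
    apply Subgroup.eq_of_le_of_card_ge
    · intro x hx
      rw [MonoidHom.mem_ker, powMonoidHom_apply]
      exact congrArg Subtype.val (pow_card_eq_one' (x := (⟨x, hx⟩ : H)))
    · rw [IsCyclic.card_powMonoidHom_ker]
      exact Nat.gcd_le_right _ Nat.card_pos
  have h2 : H ⊓ K =
      (powMonoidHom (Nat.gcd (Nat.card H) (Nat.card K)) : G →* G).ker := by
    ext x
    rw [Subgroup.mem_inf]
    conv_lhs => rw [key H, key K]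
    simp only [MonoidHom.mem_ker, powMonoidHom_apply]
    constructor
    · rintro ⟨a, b⟩
      exact pow_gcd_eq_one.2 ⟨a, b⟩
    · intro h
      exact pow_gcd_eq_one.1 h
  rw [h2, IsCyclic.card_powMonoidHom_ker]
  exact Nat.gcd_eq_right ((Nat.gcd_dvd_left _ _).trans (Subgroup.card_subgroup_dvd_card H))

/-- Let `A ≤ G × G` be invariant under the swap, with squaring invertible on the coordinates of
elements of `A` (with inverse `x ↦ x ^ k`). Then `A` is the direct product of its subgroups of
elements `(x, x)` and `(x, x⁻¹)`, of orders `w` and `t`, and `(1, μ) ∈ A` exactly when `μ` is the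
square of an element lying in both. -/
lemma card_one_snd_eq_gcd {G : Type*} [CommGroup G] [IsCyclic G] [Finite G]
    (A : Subgroup (G × G)) (k t w : ℕ)
    (hk : ∀ x y : G, (x, y) ∈ A → (x ^ k) ^ 2 = x)
    (hswap : ∀ x y : G, (x, y) ∈ A → (y, x) ∈ A)
    (hA : Nat.card A = t * w) (hw : Nat.card {x : G // (x, x) ∈ A} = w) :
    Nat.card {y : G // ((1 : G), y) ∈ A} = Nat.gcd w t := by
  let P : Subgroup G := A.comap ((MonoidHom.id G).prod (MonoidHom.id G))
  let M : Subgroup G := A.comap ((MonoidHom.id G).prod (invMonoidHom : G →* G))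
  have memP : ∀ x, x ∈ P ↔ (x, x) ∈ A := fun x => Iff.rfl
  have memM : ∀ x, x ∈ M ↔ (x, x⁻¹) ∈ A := fun x => Iff.rfl
  have hP : Nat.card P = w := hw
  -- `x² = y²` forces `x = y` on coordinates of `A`
  have hinj : ∀ x y : G, (x ^ k) ^ 2 = x → (y ^ k) ^ 2 = y → x ^ 2 = y ^ 2 → x = y := by
    intro x y hx hy hxy
    rw [← hx, ← hy, ← pow_mul, ← pow_mul, mul_comm k 2, pow_mul, pow_mul, hxy]
  have hM : Nat.card M = t := by
    have hb : Nat.card (M × P) = Nat.card A := by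
      refine Nat.card_congr (Equiv.ofBijective
        (fun z => ⟨((z.1 : G), (z.1 : G)⁻¹) * ((z.2 : G), (z.2 : G)),
          A.mul_mem z.1.2 z.2.2⟩) ⟨?_, ?_⟩)
      · rintro ⟨⟨x, hx⟩, ⟨y, hy⟩⟩ ⟨⟨x', hx'⟩, ⟨y', hy'⟩⟩ h
        simp only [Subtype.mk.injEq, Prod.mk_mul_mk, Prod.mk.injEq] at h
        obtain ⟨h1, h2⟩ := h
        have hyy : y = y' := by
          refine hinj y y' (hk _ _ hy) (hk _ _ hy') ?_
          calc y ^ 2 = (x * y) * (x⁻¹ * y) := by rw [pow_two, mul_mul_mul_comm]; simp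
            _ = (x' * y') * (x'⁻¹ * y') := by rw [h1, h2]
            _ = y' ^ 2 := by rw [pow_two, mul_mul_mul_comm]; simp
        subst hyy
        have hxx : x = x' := mul_right_cancel h1
        subst hxx
        rfl
      · rintro ⟨⟨x, y⟩, hxy⟩
        have hyx := hswap _ _ hxy
        have m1 : (x * y⁻¹) ^ k ∈ M := by
          apply M.pow_mem
          rw [memM]
          have := A.mul_mem hxy (A.inv_mem hyx)
          simpa [mul_comm] using this
        have m2 : (x * y) ^ k ∈ P := by
          apply P.pow_mem
          rw [memP]
          have := A.mul_mem hxy hyx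
          simpa [mul_comm] using this
        refine ⟨⟨⟨_, m1⟩, ⟨_, m2⟩⟩, ?_⟩
        have e1 := hk _ _ hxy
        have e2 := hk _ _ hyx
        simp only [Subtype.mk.injEq, Prod.mk_mul_mk, Prod.mk.injEq]
        constructor
        · rw [← mul_pow]
          conv_rhs => rw [← e1]
          rw [← pow_mul, mul_comm k 2, pow_mul]
          congr 1
          rw [pow_two, mul_mul_mul_comm]; simp
        · rw [← inv_pow, ← mul_pow]
          conv_rhs => rw [← e2]
          rw [← pow_mul, mul_comm k 2, pow_mul]
          congr 1
          rw [pow_two, mul_inv, inv_inv, mul_mul_mul_comm]; simp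
    rw [Nat.card_prod, hP, hA] at hb
    have hwpos : 0 < w := hP ▸ Nat.card_pos
    exact Nat.eq_of_mul_eq_mul_right hwpos hb
  rw [← hP, ← hM, ← card_inf_of_isCyclic]
  symm
  refine Nat.card_congr (Equiv.ofBijective (fun x => ⟨(x : G) ^ 2, ?_⟩) ⟨?_, ?_⟩)
  · have h1 := (memP _).1 x.2.1
    have h2 := (memM _).1 x.2.2
    have := A.mul_mem h1 (A.inv_mem h2)
    simpa [pow_two] using this
  · rintro ⟨x, hx⟩ ⟨y, hy⟩ h
    simp only [Subtype.mk.injEq] at h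
    exact Subtype.ext (hinj x y (hk _ _ hx.1) (hk _ _ hy.1) h)
  · rintro ⟨y, hy⟩
    have hy' := hswap _ _ hy
    refine ⟨⟨y ^ k, P.pow_mem ?_ k, M.pow_mem ?_ k⟩, Subtype.ext (hk _ _ hy')⟩
    · rw [memP]
      simpa using A.mul_mem hy hy'
    · rw [memM]
      simpa using A.mul_mem hy' (A.inv_mem hy)

/-! ### The norm map `x ↦ x ^ (q + 1)` on the field with `q²` elements -/

section FieldLemmas

variable {F : Type*} [Field F] [Fintype F] {h q : ℕ}

lemma charTwo_of_card (hq : q = 2 ^ h) (hF : Fintype.card F = q ^ 2) : CharP F 2 := by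
  apply CharTwo.of_one_ne_zero_of_two_eq_zero one_ne_zero
  have h0 : ((Fintype.card F : ℕ) : F) = 0 := Nat.cast_card_eq_zero F
  rw [hF, hq, ← pow_mul] at h0
  push_cast at h0
  exact eq_zero_of_pow_eq_zero h0

lemma frob_add (hq : q = 2 ^ h) (hF : Fintype.card F = q ^ 2) (x y : F) :
    (x + y) ^ q = x ^ q + y ^ q := by
  have := charTwo_of_card hq hF
  rw [hq]
  exact add_pow_char_pow x y 2 h

lemma frob_frob (hF : Fintype.card F = q ^ 2) (x : F) : (x ^ q) ^ q = x := by
  rw [← pow_mul, ← pow_two, ← hF, FiniteField.pow_card]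

lemma norm_frob (hF : Fintype.card F = q ^ 2) (x : F) :
    (x ^ (q + 1)) ^ q = x ^ (q + 1) := by
  rw [pow_succ, mul_pow, frob_frob hF, mul_comm]

lemma card_units_eq (hF : Fintype.card F = q ^ 2) : Nat.card Fˣ = (q - 1) * (q + 1) := by
  rw [Nat.card_units, Nat.card_eq_fintype_card, hF, mul_comm, ← Nat.sq_sub_sq]

lemma card_norm_ker (hF : Fintype.card F = q ^ 2) :
    Nat.card (powMonoidHom (q + 1) : Fˣ →* Fˣ).ker = q + 1 := by
  rw [IsCyclic.card_powMonoidHom_ker, card_units_eq hF, Nat.gcd_mul_left_left]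

/-- The norm is onto the nonzero elements of the subfield of order `q`. -/
lemma norm_surj (hF : Fintype.card F = q ^ 2) (a : F) (ha : a ≠ 0)
    (haq : a ^ q = a) : ∃ z : F, z ^ (q + 1) = a := by
  have hq0 : q ≠ 0 := by
    rintro rfl
    simp at hF
  have hq1 : 1 < q := by
    by_contra hlt
    have : q = 1 := by omega
    subst this
    have := Fintype.one_lt_card (α := F)
    omega
  have hrange : (powMonoidHom (q + 1) : Fˣ →* Fˣ).range = (powMonoidHom (q - 1) : Fˣ →* Fˣ).ker := by
    apply Subgroup.eq_of_le_of_card_ge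
    · rintro _ ⟨x, rfl⟩
      rw [MonoidHom.mem_ker]
      simp only [powMonoidHom_apply]
      rw [← pow_mul, mul_comm, ← card_units_eq hF]
      exact pow_card_eq_one'
    · rw [IsCyclic.card_powMonoidHom_ker, IsCyclic.card_powMonoidHom_range, card_units_eq hF,
        Nat.gcd_mul_left_left, Nat.gcd_mul_right_left, Nat.mul_div_cancel _ (by omega)]
  have hmem : Units.mk0 a ha ∈ (powMonoidHom (q - 1) : Fˣ →* Fˣ).ker := by
    rw [MonoidHom.mem_ker, powMonoidHom_apply]
    ext
    simp only [Units.val_pow_eq_pow_val, Units.val_mk0, Units.val_one]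
    apply mul_right_cancel₀ ha
    rw [one_mul, pow_sub_one_mul hq0, haq]
  rw [← hrange] at hmem
  obtain ⟨z, hz⟩ := hmem
  refine ⟨z, ?_⟩
  simpa using congrArg Units.val hz

lemma card_norm_one (hF : Fintype.card F = q ^ 2) :
    Nat.card {z : F // z ^ (q + 1) = 1} = q + 1 := by
  refine Eq.trans ?_ (card_norm_ker hF)
  symm
  refine Nat.card_congr (Equiv.ofBijective (fun u => ⟨((u : Fˣ) : F), ?_⟩) ⟨?_, ?_⟩)
  · have := u.2
    rw [MonoidHom.mem_ker, powMonoidHom_apply] at this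
    simpa using congrArg Units.val this
  · intro u v huv
    exact Subtype.ext (Units.ext (congrArg Subtype.val huv))
  · rintro ⟨z, hz⟩
    have hz0 : z ≠ 0 := by
      rintro rfl
      simp at hz
    refine ⟨⟨Units.mk0 z hz0, ?_⟩, rfl⟩
    rw [MonoidHom.mem_ker, powMonoidHom_apply]
    ext
    simpa using hz

lemma card_norm_fiber (hF : Fintype.card F = q ^ 2) (a : F) (ha : a ≠ 0)
    (haq : a ^ q = a) : Nat.card {z : F // z ^ (q + 1) = a} = q + 1 := by
  obtain ⟨b, hb⟩ := norm_surj hF a ha haq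
  have hb0 : b ≠ 0 := by
    rintro rfl
    simp at hb
    exact ha hb.symm
  refine Eq.trans ?_ (card_norm_one hF)
  symm
  refine Nat.card_congr (Equiv.ofBijective (fun u => ⟨b * u, ?_⟩) ⟨?_, ?_⟩)
  · rw [mul_pow, hb, u.2, mul_one]
  · intro u v huv
    simpa [Subtype.ext_iff, hb0] using huv
  · rintro ⟨z, hz⟩
    refine ⟨⟨z / b, ?_⟩, ?_⟩
    · rw [div_pow, hz, hb, div_self ha]
    · simp [mul_div_cancel₀, hb0]

/-- The number of affine points of the Hermitian curve. For each `x` the equation prescribes the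
norm of `y`, which has `1` or `q + 1` solutions according as `x` has norm one or not. -/
lemma card_affine (hq : q = 2 ^ h) (hF : Fintype.card F = q ^ 2) :
    (Nat.card {p : F × F // p.1 ^ (q + 1) + p.2 ^ (q + 1) = 1} : ℤ) = q ^ 3 - q := by
  classical
  have := charTwo_of_card hq hF
  have hq0 : q ≠ 0 := by rw [hq]; positivity
  have e : Nat.card {p : F × F // p.1 ^ (q + 1) + p.2 ^ (q + 1) = 1} =
      ∑ x : F, Nat.card {y : F // y ^ (q + 1) = 1 + x ^ (q + 1)} := by
    rw [← Nat.card_sigma]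
    refine Nat.card_congr
      { toFun := fun p => ⟨p.1.1, p.1.2, ?_⟩
        invFun := fun s => ⟨(s.1, s.2.1), ?_⟩
        left_inv := fun p => rfl
        right_inv := fun s => rfl }
    · have hp := p.2
      rw [← CharTwo.sub_eq_add, eq_sub_iff_add_eq, add_comm]
      exact hp
    · change s.1 ^ (q + 1) + s.2.1 ^ (q + 1) = 1
      rw [s.2.2, add_comm 1, ← add_assoc, CharTwo.add_self_eq_zero, zero_add]
  have fib : ∀ x : F, (Nat.card {y : F // y ^ (q + 1) = 1 + x ^ (q + 1)} : ℤ) =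
      (q + 1) - q * (if x ^ (q + 1) = 1 then 1 else 0) := by
    intro x
    split_ifs with hx
    · rw [hx, CharTwo.add_self_eq_zero]
      have : Nat.card {y : F // y ^ (q + 1) = 0} = 1 := by
        rw [Nat.card_eq_one_iff_unique]
        refine ⟨⟨fun a b => ?_⟩, ⟨0, by simp⟩⟩
        have ha := a.2
        have hb := b.2
        rw [pow_eq_zero_iff (by omega)] at ha hb
        exact Subtype.ext (ha.trans hb.symm)
      rw [this]
      ring
    · rw [card_norm_fiber hF]
      · push_cast; ring
      · intro h0
        exact hx (CharTwo.add_eq_zero.1 h0).symm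
      · rw [frob_add hq hF, one_pow, norm_frob hF]
  rw [e]
  push_cast
  rw [Finset.sum_congr rfl (fun x _ => fib x), Finset.sum_sub_distrib, ← Finset.mul_sum,
    Finset.sum_boole, ← Fintype.card_subtype, ← Nat.card_eq_fintype_card, card_norm_one hF]
  simp [hF]
  ring

end FieldLemmas

/-! ### The projective action and the orbit-counting lemma -/

section Action

variable {F : Type*} [Field F]

lemma gl_mulVec_ne_zero (g : GL (Fin 3) F) {v : Fin 3 → F} (hv : v ≠ 0) : g.val *ᵥ v ≠ 0 := by
  intro h0
  apply hv
  have : (g⁻¹ : GL (Fin 3) F).val *ᵥ (g.val *ᵥ v) = v := by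
    rw [Matrix.mulVec_mulVec, ← Units.val_mul, inv_mul_cancel, Units.val_one, Matrix.one_mulVec]
  rw [← this, h0, Matrix.mulVec_zero]

lemma glAct_mk (g : GL (Fin 3) F) (v : Fin 3 → F) (hv : v ≠ 0) :
    glAct g (Projectivization.mk F v hv) =
      Projectivization.mk F (g.val *ᵥ v) (gl_mulVec_ne_zero g hv) := by
  unfold glAct
  rw [Projectivization.map_mk]
  rfl

lemma glAct_one (x : Projectivization F (Fin 3 → F)) : glAct 1 x = x := by
  induction x using Projectivization.ind with
  | h v hv =>
    rw [glAct_mk]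
    simp

lemma glAct_mul (g k : GL (Fin 3) F) (x : Projectivization F (Fin 3 → F)) :
    glAct (g * k) x = glAct g (glAct k x) := by
  induction x using Projectivization.ind with
  | h v hv =>
    rw [glAct_mk, glAct_mk, glAct_mk]
    simp [Matrix.mulVec_mulVec]

lemma glAct_injective (g : GL (Fin 3) F) : Function.Injective (glAct g) := by
  intro x y hxy
  have := congrArg (glAct g⁻¹) hxy
  simpa [← glAct_mul, glAct_one] using this

lemma glAct_mk_eq_self (g : GL (Fin 3) F) (v : Fin 3 → F) (hv : v ≠ 0) :
    glAct g (Projectivization.mk F v hv) = Projectivization.mk F v hv ↔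
      ∃ c : F, g.val *ᵥ v = c • v := by
  rw [glAct_mk, Projectivization.mk_eq_mk_iff']
  exact exists_congr fun c => eq_comm

lemma mk_mem_hermitianPts (q : ℕ) (v : Fin 3 → F) (hv : v ≠ 0) :
    Projectivization.mk F v hv ∈ hermitianPts q F ↔
      v 1 ^ (q + 1) = v 0 ^ (q + 1) - v 2 ^ (q + 1) := by
  obtain ⟨a, ha⟩ := Projectivization.exists_smul_eq_mk_rep F v hv
  change (Projectivization.mk F v hv).rep 1 ^ (q + 1) =
    (Projectivization.mk F v hv).rep 0 ^ (q + 1) - (Projectivization.mk F v hv).rep 2 ^ (q + 1) ↔ _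
  rw [← ha]
  simp only [Pi.smul_apply, Units.smul_def, smul_eq_mul, mul_pow]
  rw [← mul_sub]
  exact mul_right_inj' (pow_ne_zero _ a.ne_zero)

/-- The Cauchy–Frobenius lemma for the orbits of `L` on an invariant set. -/
lemma numOrbits_mul_card [Fintype F] (L : Subgroup (GL (Fin 3) F))
    (O : Set (Projectivization F (Fin 3 → F))) (hO : ∀ g ∈ L, ∀ x ∈ O, glAct g x ∈ O) :
    numOrbits L O * Nat.card L = ∑ᶠ g : L, Nat.card {x // x ∈ O ∧ glAct g.1 x = x} := by
  classical
  let _ : MulAction L O :=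
    { smul := fun g x => ⟨glAct g.1 x.1, hO g.1 g.2 x.1 x.2⟩
      one_smul := fun x => Subtype.ext (glAct_one x.1)
      mul_smul := fun g k x => Subtype.ext (glAct_mul g.1 k.1 x.1) }
  have smul_val : ∀ (g : L) (x : O), ((g • x : O) : Projectivization F (Fin 3 → F)) =
    glAct g.1 x.1 := fun _ _ => rfl
  have : Finite (GL (Fin 3) F) := inferInstance
  let _ : Fintype L := Fintype.ofFinite _
  have : Finite (Projectivization F (Fin 3 → F)) := Quotient.finite _
  let _ : Fintype O := Fintype.ofFinite _
  let _ : Fintype (Quotient (MulAction.orbitRel L O)) := Fintype.ofFinite _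
  have key := MulAction.sum_card_fixedBy_eq_card_orbits_mul_card_group L O
  have h1 : numOrbits L O = Fintype.card (Quotient (MulAction.orbitRel L O)) := by
    rw [← Nat.card_eq_fintype_card]
    symm
    let f : O → Set (Projectivization F (Fin 3 → F)) := fun x => {y | ∃ g ∈ L, glAct g x.1 = y}
    have hf : ∀ x y : O, (MulAction.orbitRel L O) x y ↔ f x = f y := by
      intro x y
      rw [MulAction.orbitRel_apply]
      constructor
      · rintro ⟨g, rfl⟩
        ext z
        constructor
        · rintro ⟨k, hk, rfl⟩
          refine ⟨k * g.1, L.mul_mem hk g.2, ?_⟩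
          rw [glAct_mul]
          rfl
        · rintro ⟨k, hk, rfl⟩
          refine ⟨k * g.1⁻¹, L.mul_mem hk (L.inv_mem g.2), ?_⟩
          change glAct _ (glAct g.1 y.1) = _
          rw [← glAct_mul]
          simp
      · intro hxy
        have : x.1 ∈ f x := ⟨1, L.one_mem, glAct_one _⟩
        rw [hxy] at this
        obtain ⟨g, hg, hgx⟩ := this
        exact ⟨⟨g, hg⟩, Subtype.ext hgx⟩
    refine Nat.card_congr (Equiv.ofBijective
      (Quotient.lift (fun x => ⟨f x, x.1, x.2, rfl⟩) ?_) ⟨?_, ?_⟩)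
    · intro x y hxy
      exact Subtype.ext ((hf x y).1 hxy)
    · intro a b
      induction a using Quotient.inductionOn
      induction b using Quotient.inductionOn
      intro hab
      exact Quotient.sound ((hf _ _).2 (congrArg Subtype.val hab))
    · rintro ⟨_, x, hx, rfl⟩
      exact ⟨Quotient.mk _ ⟨x, hx⟩, rfl⟩
  rw [h1, Nat.card_eq_fintype_card, ← key, finsum_eq_sum_of_fintype]
  refine Finset.sum_congr rfl fun g _ => ?_
  rw [← Nat.card_eq_fintype_card]
  refine Nat.card_congr
    { toFun := fun x => ⟨x.1.1, x.1.2, congrArg Subtype.val x.2⟩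
      invFun := fun x => ⟨⟨x.1, x.2.1⟩, Subtype.ext x.2.2⟩
      left_inv := fun x => rfl
      right_inv := fun x => rfl }

/-- Conjugating the group by a symmetry of `O` preserves the number of orbits on `O`. -/
lemma numOrbits_conj (L L' : Subgroup (GL (Fin 3) F)) (C : GL (Fin 3) F)
    (O : Set (Projectivization F (Fin 3 → F))) (hC : glAct C '' O = O)
    (hL : ∀ g, g ∈ L' ↔ C * g * C⁻¹ ∈ L) : numOrbits L O = numOrbits L' O := by
  unfold numOrbits
  have hinj : Function.Injective (fun S : Set (Projectivization F (Fin 3 → F)) => glAct C '' S) :=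
    Set.image_injective.2 (glAct_injective C)
  rw [← Nat.card_image_of_injective hinj ((fun x => {y | ∃ g ∈ L', glAct g x = y}) '' O),
    Set.image_image]
  conv_lhs => rw [← hC, Set.image_image]
  congr 2
  apply Set.image_congr
  intro x _
  ext y
  constructor
  · rintro ⟨g, hg, rfl⟩
    refine ⟨_, ⟨C⁻¹ * g * C, ?_, rfl⟩, ?_⟩
    · rw [hL]
      simpa [mul_assoc] using hg
    · rw [← glAct_mul, ← glAct_mul]
      simp [mul_assoc]
  · rintro ⟨_, ⟨g, hg, rfl⟩, rfl⟩
    refine ⟨_, (hL g).1 hg, ?_⟩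
    rw [← glAct_mul, ← glAct_mul]
    simp [mul_assoc]

end Action

/-! ### Fixed points of monomial matrices on the Hermitian curve -/

section Fixed

variable {F : Type*} [Field F]

/-- The homomorphism sending `(x, y)` to the invertible matrix `diag(x, y, 1)`. -/
def diagGL (F : Type*) [Field F] : Fˣ × Fˣ →* GL (Fin 3) F where
  toFun a :=
    { val := !![(a.1 : F), 0, 0; 0, (a.2 : F), 0; 0, 0, 1]
      inv := !![((a.1⁻¹ : Fˣ) : F), 0, 0; 0, ((a.2⁻¹ : Fˣ) : F), 0; 0, 0, 1]
      val_inv := by ext i j; fin_cases i <;> fin_cases j <;> simp [Matrix.mul_apply, Fin.sum_univ_three]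
      inv_val := by ext i j; fin_cases i <;> fin_cases j <;> simp [Matrix.mul_apply, Fin.sum_univ_three] }
  map_one' := by
    ext i j
    fin_cases i <;> fin_cases j <;> simp
  map_mul' a b := by
    ext i j
    fin_cases i <;> fin_cases j <;> simp [Matrix.mul_apply, Fin.sum_univ_three]

lemma diagGL_val (a : Fˣ × Fˣ) :
    (diagGL F a).val = !![(a.1 : F), 0, 0; 0, (a.2 : F), 0; 0, 0, 1] := rfl

lemma diagGL_injective : Function.Injective (diagGL F) := by
  intro a b hab
  have h1 := congrArg (fun M : GL (Fin 3) F => M.val 0 0) hab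
  have h2 := congrArg (fun M : GL (Fin 3) F => M.val 1 1) hab
  simp only [diagGL_val] at h1 h2
  exact Prod.ext (Units.ext (by simpa using h1)) (Units.ext (by simpa using h2))

/-- The matrix of a unitary transformation fixing the third basis vector and interchanging the
points spanned by the first two. -/
def IsSwap (q : ℕ) (g : GL (Fin 3) F) : Prop :=
  ∃ β γ : F, β ^ (q + 1) = 1 ∧ γ ^ (q + 1) = 1 ∧ g.val = !![0, β, 0; γ, 0, 0; 0, 0, 1]

lemma not_isSwap_diagGL {q : ℕ} (a : Fˣ × Fˣ) : ¬ IsSwap q (diagGL F a) := by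
  rintro ⟨β, γ, -, -, hg⟩
  have := congrFun (congrFun hg 0) 0
  rw [diagGL_val] at this
  simp at this

lemma glAct_diagGL_mk (a : Fˣ × Fˣ) (v : Fin 3 → F) (hv : v ≠ 0) :
    glAct (diagGL F a) (Projectivization.mk F v hv) = Projectivization.mk F v hv ↔
      ∃ c : F, a.1 * v 0 = c * v 0 ∧ a.2 * v 1 = c * v 1 ∧ v 2 = c * v 2 := by
  rw [glAct_mk_eq_self]
  refine exists_congr fun c => ?_
  rw [diagGL_val, funext_iff, Fin.forall_fin_succ, Fin.forall_fin_succ, Fin.forall_fin_succ]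
  simp [Matrix.mulVec, dotProduct, Fin.sum_univ_three]

/-- A side of the coordinate triangle meets the Hermitian curve in the `q + 1` points whose two
nonzero coordinates have ratio of norm one. -/
lemma card_line [Fintype F] {q : ℕ} (hF : Fintype.card F = q ^ 2)
    (S : Projectivization F (Fin 3 → F) → Prop) (v : F → Fin 3 → F) (i j : Fin 3)
    (hi : ∀ ε, v ε i = 1) (hj : ∀ ε, v ε j = ε) (hv : ∀ ε, v ε ≠ 0)
    (hS : ∀ u (hu : u ≠ 0), S (Projectivization.mk F u hu) ↔
      ∃ ε, ε ^ (q + 1) = 1 ∧ u = u i • v ε) :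
    Nat.card {x // S x} = q + 1 := by
  rw [← card_norm_one hF]
  symm
  refine Nat.card_congr (Equiv.ofBijective
    (fun ε => ⟨Projectivization.mk F (v ε.1) (hv ε.1), ?_⟩) ⟨?_, ?_⟩)
  · rw [hS]
    exact ⟨ε.1, ε.2, by simp [hi]⟩
  · intro ε δ hεδ
    have h := congrArg Subtype.val hεδ
    simp only at h
    rw [Projectivization.mk_eq_mk_iff'] at h
    obtain ⟨c, hc⟩ := h
    have h1 := congrFun hc i
    have h2 := congrFun hc j
    simp only [Pi.smul_apply, hi, hj, smul_eq_mul, mul_one] at h1 h2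
    rw [h1, one_mul] at h2
    exact Subtype.ext h2.symm
  · rintro ⟨x, hx⟩
    induction x using Projectivization.ind with
    | h u hu =>
      obtain ⟨ε, hε, hue⟩ := (hS u hu).1 hx
      refine ⟨⟨ε, hε⟩, Subtype.ext ?_⟩
      have hui : u i ≠ 0 := by
        intro h0
        rw [h0, zero_smul] at hue
        exact hu hue
      refine (Projectivization.mk_eq_mk_iff' _ _ _ _ _).2 ⟨(u i)⁻¹, ?_⟩
      nth_rewrite 2 [hue]
      rw [smul_smul, inv_mul_cancel₀ hui, one_smul]

variable [Fintype F] {h q : ℕ}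

lemma mem_herm_iff (hq : q = 2 ^ h) (hF : Fintype.card F = q ^ 2) (v : Fin 3 → F) (hv : v ≠ 0) :
    Projectivization.mk F v hv ∈ hermitianPts q F ↔
      v 0 ^ (q + 1) + v 1 ^ (q + 1) + v 2 ^ (q + 1) = 0 := by
  have := charTwo_of_card hq hF
  rw [mk_mem_hermitianPts, eq_sub_iff_add_eq, ← CharTwo.add_eq_zero, add_comm, add_assoc]

/-- If `N(x) + N(y) = 0` then either both vanish or `y / x` has norm one. -/
lemma exists_ratio (hq : q = 2 ^ h) (hF : Fintype.card F = q ^ 2) (x y : F) :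
    x ^ (q + 1) + y ^ (q + 1) = 0 ↔ ∃ ε : F, ε ^ (q + 1) = 1 ∧ y = x * ε := by
  have := charTwo_of_card hq hF
  rw [CharTwo.add_eq_zero]
  constructor
  · intro hxy
    by_cases hx : x = 0
    · subst hx
      rw [zero_pow (by omega)] at hxy
      refine ⟨1, one_pow _, ?_⟩
      rw [zero_mul]
      exact eq_zero_of_pow_eq_zero hxy.symm
    · refine ⟨y / x, ?_, by field_simp⟩
      rw [div_pow, ← hxy, div_self (pow_ne_zero _ hx)]
  · rintro ⟨ε, hε, rfl⟩
    rw [mul_pow, hε, mul_one]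

lemma card_side0 (hq : q = 2 ^ h) (hF : Fintype.card F = q ^ 2)
    (S : Projectivization F (Fin 3 → F) → Prop)
    (hS : ∀ u (hu : u ≠ 0), S (Projectivization.mk F u hu) ↔
      u 0 = 0 ∧ u 1 ^ (q + 1) + u 2 ^ (q + 1) = 0) : Nat.card {x // S x} = q + 1 := by
  refine card_line hF S (fun ε => ![0, 1, ε]) 1 2 (by simp) (by simp)
    (fun ε h0 => by simpa using congrFun h0 1) ?_
  intro u hu
  rw [hS, exists_ratio hq hF, ← exists_and_left]
  refine exists_congr fun ε => ?_
  rw [funext_iff, Fin.forall_fin_succ, Fin.forall_fin_succ, Fin.forall_fin_succ]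
  simp
  tauto

lemma card_side1 (hq : q = 2 ^ h) (hF : Fintype.card F = q ^ 2)
    (S : Projectivization F (Fin 3 → F) → Prop)
    (hS : ∀ u (hu : u ≠ 0), S (Projectivization.mk F u hu) ↔
      u 1 = 0 ∧ u 0 ^ (q + 1) + u 2 ^ (q + 1) = 0) : Nat.card {x // S x} = q + 1 := by
  refine card_line hF S (fun ε => ![1, 0, ε]) 0 2 (by simp) (by simp)
    (fun ε h0 => by simpa using congrFun h0 0) ?_
  intro u hu
  rw [hS, exists_ratio hq hF, ← exists_and_left]
  refine exists_congr fun ε => ?_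
  rw [funext_iff, Fin.forall_fin_succ, Fin.forall_fin_succ, Fin.forall_fin_succ]
  simp
  tauto

lemma card_side2 (hq : q = 2 ^ h) (hF : Fintype.card F = q ^ 2)
    (S : Projectivization F (Fin 3 → F) → Prop)
    (hS : ∀ u (hu : u ≠ 0), S (Projectivization.mk F u hu) ↔
      u 2 = 0 ∧ u 0 ^ (q + 1) + u 1 ^ (q + 1) = 0) : Nat.card {x // S x} = q + 1 := by
  refine card_line hF S (fun ε => ![1, ε, 0]) 0 1 (by simp) (by simp)
    (fun ε h0 => by simpa using congrFun h0 0) ?_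
  intro u hu
  rw [hS, exists_ratio hq hF, ← exists_and_left]
  refine exists_congr fun ε => ?_
  rw [funext_iff, Fin.forall_fin_succ, Fin.forall_fin_succ, Fin.forall_fin_succ]
  simp
  tauto

lemma card_hermitianPts (hq : q = 2 ^ h) (hF : Fintype.card F = q ^ 2) :
    (Nat.card {x // x ∈ hermitianPts q F} : ℤ) = q ^ 3 + 1 := by
  classical
  have : Finite (Projectivization F (Fin 3 → F)) := Quotient.finite _
  let T : Set (Projectivization F (Fin 3 → F)) := {x | x.rep 2 = 0}
  have hT : ∀ u (hu : u ≠ 0), Projectivization.mk F u hu ∈ T ↔ u 2 = 0 := by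
    intro u hu
    obtain ⟨a, ha⟩ := Projectivization.exists_smul_eq_mk_rep F u hu
    change (Projectivization.mk F u hu).rep 2 = 0 ↔ _
    rw [← ha]
    simp [Units.smul_def]
  have h1 : Nat.card {x // x ∈ hermitianPts q F ∧ x ∈ T} = q + 1 := by
    apply card_side2 hq hF
    intro u hu
    rw [mem_herm_iff hq hF, hT]
    constructor
    · rintro ⟨a, b⟩
      rw [b, zero_pow (by omega), add_zero] at a
      exact ⟨b, a⟩
    · rintro ⟨b, a⟩
      rw [b, zero_pow (by omega), add_zero]
      exact ⟨a, rfl⟩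
  have h2 : Nat.card {x // x ∈ hermitianPts q F ∧ ¬ x ∈ T} =
      Nat.card {p : F × F // p.1 ^ (q + 1) + p.2 ^ (q + 1) = 1} := by
    have := charTwo_of_card hq hF
    have nz : ∀ p : F × F, ![p.1, p.2, 1] ≠ 0 := fun p h0 => by simpa using congrFun h0 2
    symm
    refine Nat.card_congr (Equiv.ofBijective
      (fun p => ⟨Projectivization.mk F ![p.1.1, p.1.2, 1] (nz p.1), ?_, ?_⟩) ⟨?_, ?_⟩)
    · rw [mem_herm_iff hq hF]
      have hp := p.2
      simp [hp, CharTwo.add_self_eq_zero]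
    · rw [hT]
      simp
    · intro p r hpr
      have e := congrArg Subtype.val hpr
      simp only at e
      rw [Projectivization.mk_eq_mk_iff'] at e
      obtain ⟨c, hc⟩ := e
      have c2 := congrFun hc 2
      have c0 := congrFun hc 0
      have c1 := congrFun hc 1
      simp at c0 c1 c2
      subst c2
      rw [one_mul] at c0 c1
      exact Subtype.ext (Prod.ext c0.symm c1.symm)
    · rintro ⟨x, hx, hxT⟩
      induction x using Projectivization.ind with
      | h u hu =>
        rw [hT] at hxT
        rw [mem_herm_iff hq hF] at hx
        refine ⟨⟨(u 0 / u 2, u 1 / u 2), ?_⟩, Subtype.ext ?_⟩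
        · simp only
          rw [div_pow, div_pow, ← add_div, CharTwo.add_eq_zero.1 hx,
            div_self (pow_ne_zero _ hxT)]
        · refine (Projectivization.mk_eq_mk_iff' _ _ _ _ _).2 ⟨(u 2)⁻¹, ?_⟩
          ext i
          fin_cases i <;> simp [div_eq_inv_mul, hxT]
  have h3 : Nat.card {x // x ∈ hermitianPts q F} =
      Nat.card {x // x ∈ hermitianPts q F ∧ x ∈ T} +
        Nat.card {x // x ∈ hermitianPts q F ∧ ¬ x ∈ T} := by
    rw [← Nat.card_sum]
    refine Nat.card_congr ((Equiv.sumCompl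
      (fun x : {x // x ∈ hermitianPts q F} => x.1 ∈ T)).symm.trans
      (Equiv.sumCongr (Equiv.subtypeSubtypeEquivSubtypeInter _ _)
        (Equiv.subtypeSubtypeEquivSubtypeInter _ (fun x => ¬ x ∈ T))))
  rw [h3, h1, h2]
  push_cast
  rw [card_affine hq hF]
  ring

open Classical in
/-- The number of points of the Hermitian curve fixed by `diag(x, y, 1)`. -/
lemma card_fix_diagGL (hq : q = 2 ^ h) (hF : Fintype.card F = q ^ 2) (a : Fˣ × Fˣ) :
    (Nat.card {x // x ∈ hermitianPts q F ∧ glAct (diagGL F a) x = x} : ℤ) =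
      (q + 1) * ((if a.1 = a.2 then 1 else 0) + (if a.1 = 1 then 1 else 0)
        + (if a.2 = 1 then 1 else 0)) + (if a = 1 then (q ^ 3 - 3 * q - 2 : ℤ) else 0) := by
  obtain ⟨x, y⟩ := a
  have hq1 : q + 1 ≠ 0 := by omega
  by_cases h1 : x = 1 <;> by_cases h2 : y = 1
  · subst h1 h2
    have : (Nat.card {x // x ∈ hermitianPts q F ∧ glAct (diagGL F (1, 1)) x = x}) =
        Nat.card {x // x ∈ hermitianPts q F} := by
      have e : diagGL F (1, 1) = 1 := (diagGL F).map_one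
      simp only [e, glAct_one, and_true]
    rw [this, card_hermitianPts hq hF]
    simp
    ring
  · subst h1
    rw [card_side1 hq hF]
    · simp [h2, Ne.symm h2]
    · intro u hu
      rw [mem_herm_iff hq hF, glAct_diagGL_mk]
      constructor
      · rintro ⟨e, c, c0, c1, c2⟩
        have hu1 : u 1 = 0 := by
          by_contra hu1
          have hc : (y : F) = c := mul_right_cancel₀ hu1 c1
          have hc1 : c ≠ 1 := fun h => h2 (Units.ext (by simpa [hc] using h))
          have hu0 : u 0 = 0 := by
            by_contra h0
            exact hc1 (mul_right_cancel₀ h0 (by simpa using c0.symm))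
          have hu2 : u 2 = 0 := by
            by_contra h0
            exact hc1 (mul_right_cancel₀ h0 (by simpa using c2.symm))
          rw [hu0, hu2, zero_pow hq1, zero_add, add_zero] at e
          exact hu1 (eq_zero_of_pow_eq_zero e)
        rw [hu1, zero_pow hq1, add_zero] at e
        exact ⟨hu1, e⟩
      · rintro ⟨e, e'⟩
        refine ⟨by rw [e, zero_pow hq1, add_zero, e'], 1, by simp, by simp [e], by simp⟩
  · subst h2
    rw [card_side0 hq hF]
    · simp [h1]
    · intro u hu
      rw [mem_herm_iff hq hF, glAct_diagGL_mk]
      constructor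
      · rintro ⟨e, c, c0, c1, c2⟩
        have hu1 : u 0 = 0 := by
          by_contra hu1
          have hc : (x : F) = c := mul_right_cancel₀ hu1 c0
          have hc1 : c ≠ 1 := fun h => h1 (Units.ext (by simpa [hc] using h))
          have hu0 : u 1 = 0 := by
            by_contra h0
            exact hc1 (mul_right_cancel₀ h0 (by simpa using c1.symm))
          have hu2 : u 2 = 0 := by
            by_contra h0
            exact hc1 (mul_right_cancel₀ h0 (by simpa using c2.symm))
          rw [hu0, hu2, zero_pow hq1, add_zero, add_zero] at e
          exact hu1 (eq_zero_of_pow_eq_zero e)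
        rw [hu1, zero_pow hq1, zero_add] at e
        exact ⟨hu1, e⟩
      · rintro ⟨e, e'⟩
        refine ⟨by rw [e, zero_pow hq1, zero_add, e'], 1, by simp [e], by simp, by simp⟩
  · by_cases h3 : x = y
    · subst h3
      rw [card_side2 hq hF]
      · simp [h1]
      · intro u hu
        rw [mem_herm_iff hq hF, glAct_diagGL_mk]
        constructor
        · rintro ⟨e, c, c0, c1, c2⟩
          have hu1 : u 2 = 0 := by
            by_contra hu1
            have hc : 1 = c := mul_right_cancel₀ hu1 (by simpa using c2)
            have hc1 : (x : F) ≠ c := fun h => h1 (Units.ext (by simpa [← hc] using h))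
            have hu0 : u 0 = 0 := by
              by_contra h0
              exact hc1 (mul_right_cancel₀ h0 c0)
            have hu2 : u 1 = 0 := by
              by_contra h0
              exact hc1 (mul_right_cancel₀ h0 c1)
            rw [hu0, hu2, zero_pow hq1, zero_add, zero_add] at e
            exact hu1 (eq_zero_of_pow_eq_zero e)
          rw [hu1, zero_pow hq1, add_zero] at e
          exact ⟨hu1, e⟩
        · rintro ⟨e, e'⟩
          refine ⟨by rw [e, zero_pow hq1, add_zero, e'], x, by simp, by simp, by simp [e]⟩
    · have hempty : IsEmpty {z // z ∈ hermitianPts q F ∧ glAct (diagGL F (x, y)) z = z} := by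
        constructor
        rintro ⟨z, hz, hzx⟩
        induction z using Projectivization.ind with
        | h u hu =>
          rw [mem_herm_iff hq hF] at hz
          rw [glAct_diagGL_mk] at hzx
          obtain ⟨c, c0, c1, c2⟩ := hzx
          have d0 : u 0 = 0 ∨ (x : F) = c := by
            by_cases h0 : u 0 = 0
            · exact Or.inl h0
            · exact Or.inr (mul_right_cancel₀ h0 c0)
          have d1 : u 1 = 0 ∨ (y : F) = c := by
            by_cases h0 : u 1 = 0
            · exact Or.inl h0
            · exact Or.inr (mul_right_cancel₀ h0 c1)
          have d2 : u 2 = 0 ∨ 1 = c := by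
            by_cases h0 : u 2 = 0
            · exact Or.inl h0
            · exact Or.inr (mul_right_cancel₀ h0 (by simpa using c2))
          have n1 : (x : F) ≠ 1 := fun h => h1 (Units.ext h)
          have n2 : (y : F) ≠ 1 := fun h => h2 (Units.ext h)
          have n3 : (x : F) ≠ y := fun h => h3 (Units.ext h)
          apply hu
          have z0 : (0 : F) ^ (q + 1) = 0 := zero_pow hq1
          -- at most one coordinate is nonzero, and then its norm vanishes
          have : u 0 = 0 ∧ u 1 = 0 ∧ u 2 = 0 := by
            rcases d0 with d0 | d0 <;> rcases d1 with d1 | d1 <;> rcases d2 with d2 | d2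
            · exact ⟨d0, d1, d2⟩
            · rw [d0, d1, z0, zero_add, zero_add] at hz
              exact ⟨d0, d1, eq_zero_of_pow_eq_zero hz⟩
            · rw [d0, d2, z0, zero_add, add_zero] at hz
              exact ⟨d0, eq_zero_of_pow_eq_zero hz, d2⟩
            · exact absurd (d1.trans d2.symm) n2
            · rw [d1, d2, z0, add_zero, add_zero] at hz
              exact ⟨eq_zero_of_pow_eq_zero hz, d1, d2⟩
            · exact absurd (d0.trans d2.symm) n1
            · exact absurd (d0.trans d1.symm) n3
            · exact absurd (d0.trans d1.symm) n3
          ext i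
          fin_cases i
          · exact this.1
          · exact this.2.1
          · exact this.2.2
      rw [Nat.card_of_isEmpty]
      simp [h1, h2, h3]

/-- In characteristic two a swap has a one-dimensional eigenspace in the plane of the first two
basis vectors; it is isotropic and is the only fixed point on the Hermitian curve. -/
lemma card_fix_swap (hq : q = 2 ^ h) (hF : Fintype.card F = q ^ 2) (g : GL (Fin 3) F)
    (hg : IsSwap q g) :
    Nat.card {x // x ∈ hermitianPts q F ∧ glAct g x = x} = 1 := by
  have hc2 := charTwo_of_card hq hF
  obtain ⟨β, γ, hβ, hγ, hgv⟩ := hg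
  have hq1 : q + 1 ≠ 0 := by omega
  have hβ0 : β ≠ 0 := by rintro rfl; simp at hβ
  have fixIff : ∀ v (hv : v ≠ 0), glAct g (Projectivization.mk F v hv) =
      Projectivization.mk F v hv ↔
      ∃ c : F, β * v 1 = c * v 0 ∧ γ * v 0 = c * v 1 ∧ v 2 = c * v 2 := by
    intro v hv
    rw [glAct_mk_eq_self]
    refine exists_congr fun c => ?_
    rw [hgv, funext_iff, Fin.forall_fin_succ, Fin.forall_fin_succ, Fin.forall_fin_succ]
    simp [Matrix.mulVec, dotProduct, Fin.sum_univ_three]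
  -- the square root of `β * γ`
  obtain ⟨δ, hδ⟩ : ∃ δ : F, δ ^ 2 = β * γ := by
    have hinj : Function.Injective (fun x : F => x ^ 2) := by
      intro x y hxy
      exact (frobenius_inj F 2) hxy
    exact Finite.surjective_of_injective hinj (β * γ)
  have hδN : δ ^ (q + 1) = 1 := by
    apply frobenius_inj F 2
    simp only [frobenius_def]
    rw [← pow_mul, mul_comm, pow_mul, hδ, mul_pow, hβ, hγ, one_mul, one_pow]
  rw [Nat.card_eq_one_iff_unique]
  have nz : ![β, δ, 0] ≠ 0 := fun h0 => hβ0 (by simpa using congrFun h0 0)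
  have uniq : ∀ x : {x // x ∈ hermitianPts q F ∧ glAct g x = x},
      x.1 = Projectivization.mk F ![β, δ, 0] nz := by
    rintro ⟨x, hx, hgx⟩
    induction x using Projectivization.ind with
    | h u hu =>
      rw [mem_herm_iff hq hF] at hx
      rw [fixIff] at hgx
      obtain ⟨c, c0, c1, c2⟩ := hgx
      have hu0 : u 0 ≠ 0 := by
        intro h0
        rw [h0, mul_zero] at c0
        have hu1 : u 1 = 0 := (mul_eq_zero.1 c0).resolve_left hβ0
        rw [h0, hu1, zero_pow hq1, zero_add, zero_add] at hx
        have hu2 := eq_zero_of_pow_eq_zero hx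
        apply hu
        ext i
        fin_cases i
        · exact h0
        · exact hu1
        · exact hu2
      have hcδ : c = δ := by
        apply frobenius_inj F 2
        simp only [frobenius_def]
        rw [hδ]
        apply mul_right_cancel₀ hu0
        linear_combination (-c) * c0 - β * c1
      subst hcδ
      have hN : u 0 ^ (q + 1) + u 1 ^ (q + 1) = 0 := by
        rw [CharTwo.add_eq_zero]
        have := congrArg (· ^ (q + 1)) c0
        simp only [mul_pow, hβ, hδN, one_mul] at this
        exact this.symm
      rw [hN, zero_add] at hx
      have hu2 := eq_zero_of_pow_eq_zero hx
      refine (Projectivization.mk_eq_mk_iff' _ _ _ _ _).2 ⟨u 0 / β, ?_⟩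
      ext i
      fin_cases i
      · simp [hβ0]
      · simp only [Fin.mk_one, Pi.smul_apply, Matrix.cons_val_one, Matrix.cons_val_zero,
          smul_eq_mul]
        field_simp
        linear_combination -c0
      · simp [hu2]
  refine ⟨⟨fun a b => Subtype.ext ((uniq a).trans (uniq b).symm)⟩,
    ⟨Projectivization.mk F ![β, δ, 0] nz, ?_, ?_⟩⟩
  · rw [mem_herm_iff hq hF]
    simp [hβ, hδN, CharTwo.add_self_eq_zero]
  · rw [fixIff]
    refine ⟨δ, ?_, ?_, ?_⟩
    · simp [mul_comm]
    · simp only [Matrix.cons_val_zero, Matrix.cons_val_one]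
      linear_combination -hδ
    · simp

end Fixed

/-! ### The orbit count for groups of monomial matrices -/

section Standard

variable {F : Type*} [Field F] [Fintype F] {h q : ℕ}

lemma sum_ite_eq_card {A : Type*} [Fintype A] (p : A → Prop) [DecidablePred p] {B : Type*} (r : B → Prop)
    (e : {a // p a} ≃ {b // r b}) :
    (∑ a : A, if p a then (1 : ℤ) else 0) = Nat.card {b // r b} := by
  rw [Finset.sum_boole, ← Fintype.card_subtype, ← Nat.card_eq_fintype_card, Nat.card_congr e]

/-- The orbit count in coordinates adapted to the triangle, with denominators cleared. -/
lemma numOrbits_monomial (hq : q = 2 ^ h) (hh : 1 ≤ h) (hF : Fintype.card F = q ^ 2)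
    (L : Subgroup (GL (Fin 3) F)) (t w : ℕ)
    (hdiag : ∀ x y : Fˣ, diagGL F (x, y) ∈ L → x ^ (q + 1) = 1 ∧ y ^ (q + 1) = 1)
    (hmon : ∀ g ∈ L, (∃ a, g = diagGL F a) ∨ IsSwap q g)
    (hL : Nat.card L = 2 * t * w)
    (hD : Nat.card {a : Fˣ × Fˣ // diagGL F a ∈ L} = t * w)
    (hZ : Nat.card {x : Fˣ // diagGL F (x, x) ∈ L} = w) :
    (numOrbits L (hermitianPts q F) : ℤ) * (2 * t * w) =
      (q + 1) * (w + 2 * Nat.gcd w t) + (q ^ 3 - 3 * q - 2) + t * w := by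
  classical
  have hc2 := charTwo_of_card hq hF
  let A : Subgroup (Fˣ × Fˣ) := L.comap (diagGL F)
  have memA : ∀ a, a ∈ A ↔ diagGL F a ∈ L := fun a => Iff.rfl
  -- a swap exists since the diagonal matrices form only half of `L`
  obtain ⟨s, hsL, hs⟩ : ∃ s ∈ L, IsSwap q s := by
    by_contra hcon
    push Not at hcon
    have hle : Nat.card L ≤ Nat.card {a : Fˣ × Fˣ // diagGL F a ∈ L} := by
      refine Nat.card_le_card_of_surjective
        (fun a : {a : Fˣ × Fˣ // diagGL F a ∈ L} => (⟨diagGL F a.1, a.2⟩ : L)) ?_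
      rintro ⟨g, hg⟩
      obtain ⟨a, rfl⟩ := (hmon g hg).resolve_right (hcon g hg)
      exact ⟨⟨a, hg⟩, rfl⟩
    have hpos : 0 < Nat.card L := Nat.card_pos
    rw [hD] at hle
    rw [mul_assoc] at hL
    omega
  have hswap : ∀ x y : Fˣ, (x, y) ∈ A → (y, x) ∈ A := by
    intro x y hxy
    have hmul : s * diagGL F (x, y) = diagGL F (y, x) * s := by
      obtain ⟨β, γ, -, -, hsv⟩ := hs
      apply Units.ext
      rw [Units.val_mul, Units.val_mul, hsv, diagGL_val, diagGL_val]
      ext i j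
      fin_cases i <;> fin_cases j <;> simp [Matrix.mul_apply, Fin.sum_univ_three, mul_comm]
    rw [memA, ← mul_inv_eq_of_eq_mul hmul]
    exact L.mul_mem (L.mul_mem hsL hxy) (L.inv_mem hsL)
  have hn : Nat.card {y : Fˣ // ((1 : Fˣ), y) ∈ A} = Nat.gcd w t := by
    refine card_one_snd_eq_gcd A (2 ^ (h - 1) + 1) t w ?_ hswap hD hZ
    intro x y hxy
    have h1 := (hdiag x y hxy).1
    have he : (2 ^ (h - 1) + 1) * 2 = q + 1 + 1 := by
      obtain ⟨m, rfl⟩ : ∃ m, h = m + 1 := ⟨h - 1, by omega⟩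
      rw [hq, pow_succ]
      simp
      ring
    rw [← pow_mul, he, pow_succ, h1, one_mul]
  have hn' : Nat.card {x : Fˣ // (x, (1 : Fˣ)) ∈ A} = Nat.gcd w t := by
    rw [← hn]
    exact Nat.card_congr (Equiv.subtypeEquivRight fun x => ⟨hswap _ _, hswap _ _⟩)
  have hO : ∀ g ∈ L, ∀ x ∈ hermitianPts q F, glAct g x ∈ hermitianPts q F := by
    intro g hg x hx
    induction x using Projectivization.ind with
    | h u hu =>
      rw [glAct_mk, mem_herm_iff hq hF]
      rw [mem_herm_iff hq hF] at hx
      rcases hmon g hg with ⟨⟨a, b⟩, rfl⟩ | ⟨β, γ, hβ, hγ, hgv⟩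
      · obtain ⟨h1, h2⟩ := hdiag a b hg
        have h1' : (a : F) ^ (q + 1) = 1 := by simpa using congrArg Units.val h1
        have h2' : (b : F) ^ (q + 1) = 1 := by simpa using congrArg Units.val h2
        rw [diagGL_val]
        simpa [Matrix.mulVec, dotProduct, Fin.sum_univ_three, mul_pow, h1', h2'] using hx
      · rw [hgv]
        simp only [Matrix.mulVec, dotProduct, Fin.sum_univ_three, Matrix.of_apply,
          Matrix.cons_val, zero_mul, zero_add, add_zero, mul_pow, hβ, hγ, one_mul]
        rw [add_comm (u 1 ^ (q + 1))]
        exact hx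
  have key := numOrbits_mul_card L (hermitianPts q F) hO
  let _ : Fintype L := Fintype.ofFinite _
  let _ : Fintype A := Fintype.ofFinite _
  rw [finsum_eq_sum_of_fintype, hL] at key
  have key' := congrArg (Nat.cast : ℕ → ℤ) key
  push_cast at key'
  rw [key']
  let f : L → ℤ := fun g => Nat.card {x // x ∈ hermitianPts q F ∧ glAct g.1 x = x}
  let e : A → L := fun a => ⟨diagGL F a.1, a.2⟩
  have he : Function.Injective e := by
    intro a b hab
    exact Subtype.ext (diagGL_injective (congrArg Subtype.val hab))
  -- swaps contribute one fixed point each, so `f - 1` is supported on the diagonal matrices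
  have hsum : ∑ a : A, (f (e a) - 1) = ∑ g : L, (f g - 1) := by
    refine Fintype.sum_of_injective e he _ _ ?_ (fun _ => rfl)
    rintro ⟨g, hg⟩ hnot
    rcases hmon g hg with ⟨a, rfl⟩ | hsw
    · exact absurd ⟨⟨a, hg⟩, rfl⟩ hnot
    · change ((Nat.card {x // x ∈ hermitianPts q F ∧ glAct g x = x} : ℕ) : ℤ) - 1 = 0
      rw [card_fix_swap hq hF g hsw]
      rfl
  have hcA : (Fintype.card A : ℤ) = t * w := by
    rw [← Nat.card_eq_fintype_card]
    exact_mod_cast hD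
  have hcL : (Fintype.card L : ℤ) = 2 * t * w := by
    rw [← Nat.card_eq_fintype_card, hL]
    push_cast
    ring
  have hfe : ∑ a : A, f (e a) = (q + 1) * (w + 2 * Nat.gcd w t) + (q ^ 3 - 3 * q - 2) := by
    have hval : ∀ a : A, f (e a) = _ := fun a => card_fix_diagGL hq hF a.1
    rw [Finset.sum_congr rfl fun a _ => hval a, Finset.sum_add_distrib, ← Finset.mul_sum,
      Finset.sum_add_distrib, Finset.sum_add_distrib]
    have s1 : (∑ a : A, if a.1.1 = a.1.2 then (1 : ℤ) else 0) = w := by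
      rw [← hZ]
      refine sum_ite_eq_card (fun a : A => a.1.1 = a.1.2) (fun x : Fˣ => (x, x) ∈ A)
        { toFun := fun a => ⟨a.1.1.1, ?_⟩
          invFun := fun x => ⟨⟨(x.1, x.1), x.2⟩, rfl⟩
          left_inv := ?_
          right_inv := fun x => rfl }
      · obtain ⟨⟨⟨x, y⟩, hxy⟩, hp⟩ := a
        obtain rfl : x = y := hp
        exact hxy
      · rintro ⟨⟨⟨x, y⟩, hxy⟩, hp⟩
        obtain rfl : x = y := hp
        rfl
    have s2 : (∑ a : A, if a.1.1 = 1 then (1 : ℤ) else 0) = Nat.gcd w t := by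
      rw [← hn]
      refine sum_ite_eq_card (fun a : A => a.1.1 = 1) (fun x : Fˣ => (1, x) ∈ A)
        { toFun := fun a => ⟨a.1.1.2, ?_⟩
          invFun := fun x => ⟨⟨(1, x.1), x.2⟩, rfl⟩
          left_inv := ?_
          right_inv := fun x => rfl }
      · obtain ⟨⟨⟨x, y⟩, hxy⟩, hp⟩ := a
        obtain rfl : x = 1 := hp
        exact hxy
      · rintro ⟨⟨⟨x, y⟩, hxy⟩, hp⟩
        obtain rfl : x = 1 := hp
        rfl
    have s3 : (∑ a : A, if a.1.2 = 1 then (1 : ℤ) else 0) = Nat.gcd w t := by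
      rw [← hn']
      refine sum_ite_eq_card (fun a : A => a.1.2 = 1) (fun x : Fˣ => (x, 1) ∈ A)
        { toFun := fun a => ⟨a.1.1.1, ?_⟩
          invFun := fun x => ⟨⟨(x.1, 1), x.2⟩, rfl⟩
          left_inv := ?_
          right_inv := fun x => rfl }
      · obtain ⟨⟨⟨x, y⟩, hxy⟩, hp⟩ := a
        obtain rfl : y = 1 := hp
        exact hxy
      · rintro ⟨⟨⟨x, y⟩, hxy⟩, hp⟩
        obtain rfl : y = 1 := hp
        rfl
    have s4 : (∑ a : A, if a.1 = 1 then (q ^ 3 - 3 * q - 2 : ℤ) else 0) =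
        q ^ 3 - 3 * q - 2 := by
      rw [Finset.sum_eq_single (1 : A)]
      · simp
      · intro b _ hb
        rw [if_neg]
        intro h1
        exact hb (Subtype.ext h1)
      · simp
    rw [s1, s2, s3, s4]
    ring
  rw [Finset.sum_sub_distrib, Finset.sum_sub_distrib, hfe] at hsum
  simp only [Finset.sum_const, Finset.card_univ, nsmul_eq_mul, mul_one, hcA, hcL] at hsum
  change ∑ g : L, f g = _
  linear_combination -hsum

end Standard

/-! ### Coordinates adapted to a self-polar triangle -/

section Frame

variable {F : Type*} [Field F] [Fintype F] {h q : ℕ}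

/-- A linear map in `M_ℓ` is unitary on the plane of vectors with vanishing third coordinate, so
it scales one unit vector to another only by a factor of norm one. -/
lemma norm_eq_one_of_mem_Ml (hq : q = 2 ^ h) (hF : Fintype.card F = q ^ 2)
    (k : GL (Fin 3) F) (hk : k ∈ MlSet q F) (p r : Fin 3 → F) (c : F)
    (hp2 : p 2 = 0) (hp : p 0 ^ q * p 0 + p 1 ^ q * p 1 = 1)
    (hr : r 0 ^ q * r 0 + r 1 ^ q * r 1 = 1) (hkp : k.val *ᵥ p = c • r) : c ^ (q + 1) = 1 := by
  have hc2 := charTwo_of_card hq hF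
  have h2 : (2 : F) = 0 := CharTwo.two_eq_zero
  obtain ⟨a, d, τ, had, hτ, hkv⟩ := hk
  rw [pow_succ] at had hτ ⊢
  rw [pow_succ] at had
  rw [hkv] at hkp
  have e0 := congrFun hkp 0
  have e1 := congrFun hkp 1
  simp [Matrix.mulVec, dotProduct, Fin.sum_univ_three, hp2] at e0 e1
  have f0 := congrArg (· ^ q) e0
  have f1 := congrArg (· ^ q) e1
  simp only [frob_add hq hF, mul_pow, frob_frob hF] at f0 f1
  calc c ^ q * c = (c ^ q * r 0 ^ q) * (c * r 0) + (c ^ q * r 1 ^ q) * (c * r 1) := by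
        linear_combination (-(c ^ q * c)) * hr
    _ = 1 := by
        rw [← e0, ← e1, ← f0, ← f1]
        linear_combination (p 0 ^ q * p 0 + p 1 ^ q * p 1 * (τ ^ q * τ)) * had
          + (p 1 ^ q * p 1) * hτ + hp
          + (p 0 ^ q * p 0 * d ^ q * d + p 1 ^ q * p 1 * (τ ^ q * τ) * d ^ q * d
            + p 0 ^ q * p 1 * τ * a ^ q * d ^ q + p 1 ^ q * p 0 * τ ^ q * a * d) * h2

/-- The matrix with columns `p`, `r` and the third standard basis vector, where `p`, `r` are
orthonormal vectors with vanishing third coordinate. Its inverse is its conjugate transpose. -/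
def frameGL (q : ℕ) (p r : Fin 3 → F)
    (hpp : p 0 ^ q * p 0 + p 1 ^ q * p 1 = 1) (hpr : p 0 ^ q * r 0 + p 1 ^ q * r 1 = 0)
    (hrp : r 0 ^ q * p 0 + r 1 ^ q * p 1 = 0) (hrr : r 0 ^ q * r 0 + r 1 ^ q * r 1 = 1) :
    GL (Fin 3) F :=
  have hinv : !![p 0 ^ q, p 1 ^ q, 0; r 0 ^ q, r 1 ^ q, 0; 0, 0, 1] *
      !![p 0, r 0, 0; p 1, r 1, 0; 0, 0, 1] = 1 := by
    ext i j
    fin_cases i <;> fin_cases j <;>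
      simp [Matrix.mul_apply, Fin.sum_univ_three, hpp, hpr, hrp, hrr]
  { val := !![p 0, r 0, 0; p 1, r 1, 0; 0, 0, 1]
    inv := !![p 0 ^ q, p 1 ^ q, 0; r 0 ^ q, r 1 ^ q, 0; 0, 0, 1]
    val_inv := mul_eq_one_comm.1 hinv
    inv_val := hinv }

/-- The orbit count for a group permuting the points spanned by two orthonormal vectors. -/
lemma numOrbits_frame (hq : q = 2 ^ h) (hh : 1 ≤ h) (hF : Fintype.card F = q ^ 2)
    (L : Subgroup (GL (Fin 3) F)) (t w : ℕ) (p r : Fin 3 → F) (hp0 : p ≠ 0) (hr0 : r ≠ 0)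
    (hp2 : p 2 = 0) (hr2 : r 2 = 0)
    (hpp : p 0 ^ q * p 0 + p 1 ^ q * p 1 = 1) (hpr : p 0 ^ q * r 0 + p 1 ^ q * r 1 = 0)
    (hrp : r 0 ^ q * p 0 + r 1 ^ q * p 1 = 0) (hrr : r 0 ^ q * r 0 + r 1 ^ q * r 1 = 1)
    (hLMl : (L : Set (GL (Fin 3) F)) ⊆ MlSet q F)
    (hperm : ∀ g ∈ L, (glAct g (.mk F p hp0) = .mk F p hp0 ∧ glAct g (.mk F r hr0) = .mk F r hr0) ∨
      (glAct g (.mk F p hp0) = .mk F r hr0 ∧ glAct g (.mk F r hr0) = .mk F p hp0))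
    (hL : Nat.card L = 2 * t * w)
    (hD : Nat.card {g : GL (Fin 3) F // g ∈ L ∧ glAct g (.mk F p hp0) = .mk F p hp0 ∧
      glAct g (.mk F r hr0) = .mk F r hr0} = t * w)
    (hZ : Nat.card ((L : Set (GL (Fin 3) F)) ∩ ZSet q F : Set (GL (Fin 3) F)) = w) :
    (numOrbits L (hermitianPts q F) : ℤ) * (2 * t * w) =
      (q + 1) * (w + 2 * Nat.gcd w t) + (q ^ 3 - 3 * q - 2) + t * w := by
  have hfin : Finite (Projectivization F (Fin 3 → F)) := Quotient.finite _
  let C := frameGL q p r hpp hpr hrp hrr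
  have hCv : C.val = !![p 0, r 0, 0; p 1, r 1, 0; 0, 0, 1] := rfl
  have hC0 : ∀ j, C.val j 0 = p j := by
    intro j; rw [hCv]; fin_cases j <;> simp [hp2]
  have hC1 : ∀ j, C.val j 1 = r j := by
    intro j; rw [hCv]; fin_cases j <;> simp [hr2]
  have hC2 : ∀ j, C.val j 2 = (![0, 0, 1] : Fin 3 → F) j := by
    intro j; rw [hCv]; fin_cases j <;> simp
  -- the columns of `k * C`
  have col0 : ∀ (k : GL (Fin 3) F) i, (k.val * C.val) i 0 = (k.val *ᵥ p) i := by
    intro k i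
    simp only [Matrix.mul_apply, Matrix.mulVec, dotProduct, hC0]
  have col1 : ∀ (k : GL (Fin 3) F) i, (k.val * C.val) i 1 = (k.val *ᵥ r) i := by
    intro k i
    simp only [Matrix.mul_apply, Matrix.mulVec, dotProduct, hC1]
  have col2 : ∀ k ∈ L, ∀ i, (k.val * C.val) i 2 = (![0, 0, 1] : Fin 3 → F) i := by
    intro k hk i
    obtain ⟨a, d, τ, -, -, hkv⟩ := hLMl hk
    rw [hkv, hCv]
    fin_cases i <;> simp [Matrix.mul_apply, Fin.sum_univ_three]
  have conj_diag : ∀ k ∈ L, ∀ a : Fˣ × Fˣ, k = C * diagGL F a * C⁻¹ ↔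
      (k.val *ᵥ p = (a.1 : F) • p ∧ k.val *ᵥ r = (a.2 : F) • r) := by
    intro k hk a
    rw [eq_mul_inv_iff_mul_eq, Units.ext_iff, Units.val_mul, Units.val_mul, diagGL_val]
    constructor
    · intro hkC
      constructor
      · ext i
        rw [← col0, hkC]
        simp [Matrix.mul_apply, Fin.sum_univ_three, hC0, mul_comm]
      · ext i
        rw [← col1, hkC]
        simp [Matrix.mul_apply, Fin.sum_univ_three, hC1, mul_comm]
    · rintro ⟨e0, e1⟩
      ext i j
      fin_cases j
      · refine (col0 k i).trans ?_
        rw [e0]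
        simp [Matrix.mul_apply, Fin.sum_univ_three, hC0, mul_comm]
      · refine (col1 k i).trans ?_
        rw [e1]
        simp [Matrix.mul_apply, Fin.sum_univ_three, hC1, mul_comm]
      · refine (col2 k hk i).trans ?_
        simp [Matrix.mul_apply, Fin.sum_univ_three, hC2]
  have exists_diag : ∀ k ∈ L, glAct k (.mk F p hp0) = .mk F p hp0 →
      glAct k (.mk F r hr0) = .mk F r hr0 → ∃ a, k = C * diagGL F a * C⁻¹ := by
    intro k hk h1 h2
    rw [glAct_mk_eq_self] at h1 h2
    obtain ⟨c, hc⟩ := h1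
    obtain ⟨d, hd⟩ := h2
    have hcN := norm_eq_one_of_mem_Ml hq hF k (hLMl hk) p p c hp2 hpp hpp hc
    have hdN := norm_eq_one_of_mem_Ml hq hF k (hLMl hk) r r d hr2 hrr hrr hd
    have hc0 : c ≠ 0 := by rintro rfl; simp at hcN
    have hd0 : d ≠ 0 := by rintro rfl; simp at hdN
    exact ⟨(Units.mk0 c hc0, Units.mk0 d hd0), (conj_diag k hk _).2 ⟨hc, hd⟩⟩
  let L' : Subgroup (GL (Fin 3) F) := L.comap (MulAut.conj C).toMonoidHom
  have memL' : ∀ g, g ∈ L' ↔ C * g * C⁻¹ ∈ L := fun g => Iff.rfl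
  have hdiag : ∀ x y : Fˣ, diagGL F (x, y) ∈ L' → x ^ (q + 1) = 1 ∧ y ^ (q + 1) = 1 := by
    intro x y hxy
    rw [memL'] at hxy
    obtain ⟨e0, e1⟩ := (conj_diag _ hxy (x, y)).1 rfl
    constructor
    · ext
      simpa using norm_eq_one_of_mem_Ml hq hF _ (hLMl hxy) p p x hp2 hpp hpp e0
    · ext
      simpa using norm_eq_one_of_mem_Ml hq hF _ (hLMl hxy) r r y hr2 hrr hrr e1
  have hmon : ∀ g ∈ L', (∃ a, g = diagGL F a) ∨ IsSwap q g := by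
    intro g hg
    rw [memL'] at hg
    rcases hperm _ hg with ⟨h1, h2⟩ | ⟨h1, h2⟩
    · left
      obtain ⟨a, ha⟩ := exists_diag _ hg h1 h2
      exact ⟨a, mul_left_cancel (mul_right_cancel ha)⟩
    · right
      rw [glAct_mk, Projectivization.mk_eq_mk_iff'] at h1 h2
      obtain ⟨c, hc⟩ := h1
      obtain ⟨d, hd⟩ := h2
      have hcN := norm_eq_one_of_mem_Ml hq hF _ (hLMl hg) p r c hp2 hpp hrr hc.symm
      have hdN := norm_eq_one_of_mem_Ml hq hF _ (hLMl hg) r p d hr2 hrr hpp hd.symm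
      refine ⟨d, c, hdN, hcN, ?_⟩
      have hkC : (C * g * C⁻¹).val * C.val = C.val * g.val := by
        rw [← Units.val_mul, inv_mul_cancel_right, Units.val_mul]
      have hCg : C.val * g.val = C.val * !![0, d, 0; c, 0, 0; 0, 0, 1] := by
        rw [← hkC]
        ext i j
        fin_cases j
        · refine (col0 _ i).trans ?_
          rw [← hc]
          simp [Matrix.mul_apply, Fin.sum_univ_three, hC1, mul_comm]
        · refine (col1 _ i).trans ?_
          rw [← hd]
          simp [Matrix.mul_apply, Fin.sum_univ_three, hC0, mul_comm]
        · refine (col2 _ hg i).trans ?_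
          simp [Matrix.mul_apply, Fin.sum_univ_three, hC2]
      exact (Units.mul_right_inj C).1 hCg
  have hL' : Nat.card L' = 2 * t * w := by
    rw [← hL]
    exact Nat.card_congr (Equiv.subtypeEquiv (MulAut.conj C).toEquiv (fun _ => Iff.rfl))
  have hconj_inj : ∀ g k : GL (Fin 3) F, C * g * C⁻¹ = C * k * C⁻¹ → g = k :=
    fun g k hgk => mul_left_cancel (mul_right_cancel hgk)
  have hD' : Nat.card {a : Fˣ × Fˣ // diagGL F a ∈ L'} = t * w := by
    rw [← hD]
    refine Nat.card_congr (Equiv.ofBijective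
      (fun a => ⟨C * diagGL F a.1 * C⁻¹, a.2, ?_, ?_⟩) ⟨?_, ?_⟩)
    · rw [glAct_mk_eq_self]
      exact ⟨_, ((conj_diag _ a.2 a.1).1 rfl).1⟩
    · rw [glAct_mk_eq_self]
      exact ⟨_, ((conj_diag _ a.2 a.1).1 rfl).2⟩
    · intro a b hab
      exact Subtype.ext (diagGL_injective (hconj_inj _ _ (congrArg Subtype.val hab)))
    · rintro ⟨k, hk, h1, h2⟩
      obtain ⟨a, rfl⟩ := exists_diag k hk h1 h2
      exact ⟨⟨a, hk⟩, rfl⟩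
  have hscalar : ∀ x : Fˣ, (C * diagGL F (x, x) * C⁻¹).val = Matrix.diagonal ![(x : F), x, 1] := by
    intro x
    have hcomm : C.val * (diagGL F (x, x)).val = Matrix.diagonal ![(x : F), x, 1] * C.val := by
      rw [hCv, diagGL_val]
      ext i j
      fin_cases i <;> fin_cases j <;>
        simp [Matrix.mul_apply, Fin.sum_univ_three, mul_comm, Matrix.diagonal_apply]
    rw [Units.val_mul, Units.val_mul, hcomm, mul_assoc, Units.mul_inv, mul_one]
  have hZ' : Nat.card {x : Fˣ // diagGL F (x, x) ∈ L'} = w := by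
    refine Eq.trans ?_ hZ
    refine Nat.card_congr (Equiv.ofBijective
      (fun x => ⟨C * diagGL F (x.1, x.1) * C⁻¹, x.2, (x.1 : F), ?_, hscalar x.1⟩) ⟨?_, ?_⟩)
    · simpa using congrArg Units.val (hdiag _ _ x.2).1
    · intro a b hab
      have := diagGL_injective (hconj_inj _ _ (congrArg Subtype.val hab))
      exact Subtype.ext (congrArg Prod.fst this)
    · rintro ⟨k, hk, ε, hε, hkv⟩
      have hε0 : ε ≠ 0 := by rintro rfl; simp at hε
      have hke : C * diagGL F (Units.mk0 ε hε0, Units.mk0 ε hε0) * C⁻¹ = k := by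
        apply Units.ext
        rw [hscalar, hkv]
        rfl
      refine ⟨⟨Units.mk0 ε hε0, ?_⟩, Subtype.ext hke⟩
      rw [memL', hke]
      exact hk
  have hCO : glAct C '' hermitianPts q F = hermitianPts q F := by
    refine Set.eq_of_subset_of_ncard_le ?_ ?_ (Set.toFinite _)
    · rintro _ ⟨x, hx, rfl⟩
      induction x using Projectivization.ind with
      | h u hu =>
        rw [glAct_mk, mem_herm_iff hq hF, hCv]
        rw [mem_herm_iff hq hF] at hx
        simp only [pow_succ] at hx ⊢
        simp [Matrix.mulVec, dotProduct, Fin.sum_univ_three, frob_add hq hF, mul_pow]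
        linear_combination hx + (u 0 ^ q * u 0) * hpp + (u 0 ^ q * u 1) * hpr
          + (u 1 ^ q * u 0) * hrp + (u 1 ^ q * u 1) * hrr
    · rw [Set.ncard_image_of_injective _ (glAct_injective C)]
  rw [numOrbits_conj L L' C _ hCO memL']
  exact numOrbits_monomial hq hh hF L' t w hdiag hmon hL' hD' hZ'

/-- A non-isotropic point on the line `Z = 0` is spanned by a unit vector, since the inverse of
the value of the form at a representative is a norm. -/
lemma exists_unit_rep (hq : q = 2 ^ h) (hF : Fintype.card F = q ^ 2)
    (x : Projectivization F (Fin 3 → F)) (hx2 : x.rep 2 = 0)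
    (hx : hermForm q x.rep x.rep ≠ 0) :
    ∃ z : F, z ≠ 0 ∧ (z * x.rep 0) ^ q * (z * x.rep 0) + (z * x.rep 1) ^ q * (z * x.rep 1) = 1 := by
  have hc2 := charTwo_of_card hq hF
  have hq0 : q ≠ 0 := by rw [hq]; positivity
  have hB : hermForm q x.rep x.rep = x.rep 0 ^ (q + 1) + x.rep 1 ^ (q + 1) := by
    unfold hermForm
    rw [hx2, CharTwo.neg_eq]
    ring
  rw [hB] at hx
  obtain ⟨z, hz⟩ := norm_surj hF (x.rep 0 ^ (q + 1) + x.rep 1 ^ (q + 1))⁻¹ (inv_ne_zero hx)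
    (by rw [inv_pow, frob_add hq hF, norm_frob hF, norm_frob hF])
  refine ⟨z, ?_, ?_⟩
  · rintro rfl
    rw [zero_pow (by omega)] at hz
    exact inv_ne_zero hx hz.symm
  · rw [← pow_succ, ← pow_succ, mul_pow, mul_pow, hz, ← mul_add, inv_mul_cancel₀ hx]

end Frame

theorem stmt13 (h q t w : ℕ) (hh : 1 ≤ h) (hq : q = 2 ^ h)
    (F : Type*) [Field F] [Fintype F] (hF : Fintype.card F = q ^ 2)
    (P P₁ P₂ : Projectivization F (Fin 3 → F))
    (hP : P = Projectivization.mk F (![0, 0, 1] : Fin 3 → F)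
      (by intro hcon; have h2 := congrFun hcon 2; simp at h2))
    (hne01 : P ≠ P₁) (hne02 : P ≠ P₂) (hne12 : P₁ ≠ P₂)
    (hselfpolar : (∀ x ∈ ({P, P₁, P₂} : Set (Projectivization F (Fin 3 → F))),
        hermForm q x.rep x.rep ≠ 0) ∧
      (∀ x ∈ ({P, P₁, P₂} : Set (Projectivization F (Fin 3 → F))),
        ∀ y ∈ ({P, P₁, P₂} : Set (Projectivization F (Fin 3 → F))),
          x ≠ y → hermForm q x.rep y.rep = 0))
    (L : Subgroup (GL (Fin 3) F)) (hLMl : (L : Set (GL (Fin 3) F)) ⊆ MlSet q F)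
    (hstab : ∀ g ∈ L, ∀ x ∈ ({P, P₁, P₂} : Set (Projectivization F (Fin 3 → F))),
      glAct g x ∈ ({P, P₁, P₂} : Set (Projectivization F (Fin 3 → F))))
    (hindex2 : Nat.card ↥L = 2 * Nat.card
      {g : GL (Fin 3) F | g ∈ L ∧
        ∀ x ∈ ({P, P₁, P₂} : Set (Projectivization F (Fin 3 → F))), glAct g x = x})
    (hZcard : Nat.card ((L : Set (GL (Fin 3) F)) ∩ ZSet q F : Set (GL (Fin 3) F)) = w)
    (hLcard : Nat.card ↥L = 2 * t * w) :
    (numOrbits L (hermitianPts q F) : ℚ)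
      = 1 + ((q : ℚ) - (t : ℚ) + 1) / (2 * (t : ℚ))
        + ((q : ℚ) + 1) * (Nat.gcd w t : ℚ) / ((t : ℚ) * (w : ℚ))
        + ((q : ℚ) + 1) ^ 2 * ((q : ℚ) - 2) / (2 * (t : ℚ) * (w : ℚ)) := by
  have hc2 := charTwo_of_card hq hF
  have hq0 : q ≠ 0 := by rw [hq]; positivity
  obtain ⟨hsp, hort⟩ := hselfpolar
  have mP : P ∈ ({P, P₁, P₂} : Set (Projectivization F (Fin 3 → F))) := by simp
  have m1 : P₁ ∈ ({P, P₁, P₂} : Set (Projectivization F (Fin 3 → F))) := by simp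
  have m2 : P₂ ∈ ({P, P₁, P₂} : Set (Projectivization F (Fin 3 → F))) := by simp
  -- orthogonality to `(0 : 0 : 1)` kills the third coordinate
  have third : ∀ x : Projectivization F (Fin 3 → F), hermForm q P.rep x.rep = 0 →
      x.rep 2 = 0 := by
    intro x hx
    obtain ⟨a, ha⟩ := Projectivization.exists_smul_eq_mk_rep F (![0, 0, 1] : Fin 3 → F)
      (by intro hcon; have h2 := congrFun hcon 2; simp at h2)
    rw [← hP] at ha
    unfold hermForm at hx
    rw [← ha] at hx
    simpa [Units.smul_def, hq0] using hx
  have h12 := third P₁ (hort P mP P₁ m1 hne01)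
  have h22 := third P₂ (hort P mP P₂ m2 hne02)
  obtain ⟨z₁, hz₁, hpp⟩ := exists_unit_rep hq hF P₁ h12 (hsp P₁ m1)
  obtain ⟨z₂, hz₂, hrr⟩ := exists_unit_rep hq hF P₂ h22 (hsp P₂ m2)
  have o12 := hort P₁ m1 P₂ m2 hne12
  have o21 := hort P₂ m2 P₁ m1 hne12.symm
  unfold hermForm at o12 o21
  rw [h22, CharTwo.neg_eq, mul_zero, add_zero] at o12
  rw [h12, CharTwo.neg_eq, mul_zero, add_zero] at o21
  have hp0 : z₁ • P₁.rep ≠ 0 := smul_ne_zero hz₁ P₁.rep_nonzero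
  have hr0 : z₂ • P₂.rep ≠ 0 := smul_ne_zero hz₂ P₂.rep_nonzero
  have e1 : Projectivization.mk F (z₁ • P₁.rep) hp0 = P₁ := by
    conv_rhs => rw [← P₁.mk_rep]
    exact (Projectivization.mk_eq_mk_iff' _ _ _ _ _).2 ⟨z₁, rfl⟩
  have e2 : Projectivization.mk F (z₂ • P₂.rep) hr0 = P₂ := by
    conv_rhs => rw [← P₂.mk_rep]
    exact (Projectivization.mk_eq_mk_iff' _ _ _ _ _).2 ⟨z₂, rfl⟩
  have fixP : ∀ g ∈ L, glAct g P = P := by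
    intro g hg
    obtain ⟨a, c, τ, -, -, hgv⟩ := hLMl hg
    rw [hP, glAct_mk_eq_self]
    refine ⟨1, ?_⟩
    rw [hgv]
    ext i
    fin_cases i <;> simp [Matrix.mulVec, dotProduct, Fin.sum_univ_three]
  have hperm : ∀ g ∈ L, (glAct g P₁ = P₁ ∧ glAct g P₂ = P₂) ∨
      (glAct g P₁ = P₂ ∧ glAct g P₂ = P₁) := by
    intro g hg
    have hinj := glAct_injective g
    have i1 := hstab g hg P₁ m1
    have i2 := hstab g hg P₂ m2
    simp only [Set.mem_insert_iff, Set.mem_singleton_iff] at i1 i2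
    have n1 : glAct g P₁ ≠ P := fun hcon => hne01 (hinj ((fixP g hg).trans hcon.symm))
    have n2 : glAct g P₂ ≠ P := fun hcon => hne02 (hinj ((fixP g hg).trans hcon.symm))
    rcases i1.resolve_left n1 with i1 | i1 <;> rcases i2.resolve_left n2 with i2 | i2
    · exact absurd (hinj (i1.trans i2.symm)) hne12
    · exact Or.inl ⟨i1, i2⟩
    · exact Or.inr ⟨i1, i2⟩
    · exact absurd (hinj (i1.trans i2.symm)) hne12
  have hD : Nat.card {g : GL (Fin 3) F // g ∈ L ∧ glAct g P₁ = P₁ ∧ glAct g P₂ = P₂} = t * w := by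
    have hcongr : Nat.card {g : GL (Fin 3) F | g ∈ L ∧
        ∀ x ∈ ({P, P₁, P₂} : Set (Projectivization F (Fin 3 → F))), glAct g x = x} =
        Nat.card {g : GL (Fin 3) F // g ∈ L ∧ glAct g P₁ = P₁ ∧ glAct g P₂ = P₂} := by
      refine Nat.card_congr (Equiv.subtypeEquivRight fun g => ?_)
      constructor
      · rintro ⟨hg, hx⟩
        exact ⟨hg, hx _ m1, hx _ m2⟩
      · rintro ⟨hg, hx1, hx2⟩
        refine ⟨hg, ?_⟩
        rintro x (rfl | rfl | rfl)
        · exact fixP g hg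
        · exact hx1
        · exact hx2
    rw [hcongr, hLcard, mul_assoc] at hindex2
    omega
  have hmain := numOrbits_frame hq hh hF L t w (z₁ • P₁.rep) (z₂ • P₂.rep) hp0 hr0
    (by simp [h12]) (by simp [h22]) hpp
    (by
      simp only [Pi.smul_apply, smul_eq_mul, mul_pow]
      linear_combination (z₁ ^ q * z₂) * o12)
    (by
      simp only [Pi.smul_apply, smul_eq_mul, mul_pow]
      linear_combination (z₂ ^ q * z₁) * o21)
    hrr hLMl (by rw [e1, e2]; exact hperm) hLcard (by rw [e1, e2]; exact hD) hZcard
  have hpos : 0 < 2 * t * w := by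
    rw [← hLcard]
    have : Finite (GL (Fin 3) F) := inferInstance
    exact Nat.card_pos
  have ht : (t : ℚ) ≠ 0 := by
    rintro h0
    have : t = 0 := by exact_mod_cast h0
    simp [this] at hpos
  have hw : (w : ℚ) ≠ 0 := by
    rintro h0
    have : w = 0 := by exact_mod_cast h0
    simp [this] at hpos
  have hmain' : (numOrbits L (hermitianPts q F) : ℚ) * (2 * t * w) =
      (q + 1) * (w + 2 * Nat.gcd w t) + (q ^ 3 - 3 * q - 2) + t * w := by
    exact_mod_cast hmain
  rw [← eq_div_iff (by positivity)] at hmain'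
  rw [hmain']
  field_simp
  ring
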